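/- Let n ≥ 2 and let Γ be a finitely generated discrete subgroup of SO₀(1,n−1) which is nonelementary (every Γ-orbit in ℍ^{n−1} ∪ 𝒮⁺, with Γ acting on 𝒮⁺ by v ↦ γv/N(γv), is infinite) and convex cocompact: there is a compact set K ⊆ ℝⁿ such that the convex hull C of the limit set satisfies C ⊆ ⋃_{γ ∈ Γ} γ·K. Then every cocycle τ : Γ → ℝⁿ is future admissible, i.e. Ω⁺(Λ_τ) ≠ ∅. -/

import Mathlib

/-!
Since `⟨e|v⟩ = -1/√2` for every `v ∈ 𝒮⁺`, the point `t·e` lies in `Ω⁺(Λ_τ)` for large `t` as soon as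
the numbers `s_τ(γ)` are bounded below, so it suffices to bound `|s_τ(γ)|` uniformly (`s_bound`).

Fix a point `p` of the convex core. The repulsive direction `v` of a loxodromic `γ` is a limit point
(`fixed_mem_limitSet`), so the geodesic ray from `p` to `v` stays in the core (`ray_mem`). Let `x_j`
be its point at distance `j log 2` from `p` and write `x_j = g_j k_j` with `g_j ∈ Γ` and `k_j ∈ K`.
Then `⟨k_j|g_j⁻¹ v⟩ = ⟨x_j|v⟩ = 2⁻ʲ⟨p|v⟩`, so `g_j⁻¹ v` decays like `2⁻ʲ`. The transition elements
`g_j⁻¹ g_{j+1}` move the basepoint by a bounded amount (`transition_bound`), hence lie in a finite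
set by discreteness, and `τ` is bounded on them (`tau_bound`). The cocycle relation gives
`⟨τ(g_{j+1})|v⟩ = ⟨τ(g_j)|v⟩ + ⟨τ(g_j⁻¹ g_{j+1})|g_j⁻¹ v⟩`, so the sequence `⟨τ(g_j)|v⟩` is bounded by
a geometric series, uniformly in `γ`.

Its limit is `s_τ(γ)`: the points `γ x_j` stay at bounded distance from `x_j`, so
`h_j = g_j⁻¹ γ g_j` also ranges over a finite set (depending on `γ`), and `τ(γ g_j) = τ(g_j h_j)`
gives `⟨τ(γ)|v⟩ + λ⁻¹⟨τ(g_j)|v⟩ = ⟨τ(g_j)|v⟩ + ⟨τ(h_j)|g_j⁻¹ v⟩`, whose last term tends to `0`.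

If `Λ_τ` is nonempty, a point `p` of the core exists because the infinite `Γ`-orbit of a fixed
direction provides two distinct limit points (`core_nonempty`).
-/

open Set Matrix Filter

noncomputable section

/-- The Minkowski bilinear form `⟨x|y⟩ = -x₀y₀ + x₁y₁ + … + x_{n-1}y_{n-1}` on `ℝⁿ`. -/
def mink {n : ℕ} (x y : Fin n → ℝ) : ℝ :=
  ∑ i : Fin n, (if (i : ℕ) = 0 then (-1 : ℝ) else 1) * x i * y i

/-- The Euclidean norm `N` on `ℝⁿ`. -/
def eNorm {n : ℕ} (x : Fin n → ℝ) : ℝ := Real.sqrt (∑ i : Fin n, x i ^ 2)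

/-- `𝒮⁺`: future-oriented lightlike vectors of Euclidean norm 1. -/
def Splus (n : ℕ) : Set (Fin n → ℝ) :=
  {v | mink v v = 0 ∧ ∑ i : Fin n, v i ^ 2 = 1 ∧ ∀ i : Fin n, (i : ℕ) = 0 → 0 < v i}

/-- `Ω⁺(Λ) = {x : ⟨x|v⟩ < s for all (v,s) ∈ Λ}`. -/
def OmegaPlus {n : ℕ} (Λ : Set ((Fin n → ℝ) × ℝ)) : Set (Fin n → ℝ) :=
  {x | ∀ p ∈ Λ, mink x p.1 < p.2}

/-- Membership in `SO₀(1,n-1)`. -/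
def IsSOo {n : ℕ} (γ : GL (Fin n) ℝ) : Prop :=
  (∀ x y : Fin n → ℝ, mink ((γ : Matrix (Fin n) (Fin n) ℝ).mulVec x)
      ((γ : Matrix (Fin n) (Fin n) ℝ).mulVec y) = mink x y) ∧
  (γ : Matrix (Fin n) (Fin n) ℝ).det = 1 ∧
  ∀ i : Fin n, (i : ℕ) = 0 → 0 < (γ : Matrix (Fin n) (Fin n) ℝ) i i

/-- A cocycle `τ : Γ → ℝⁿ`. -/
def IsCocycle {n : ℕ} (Γ : Subgroup (GL (Fin n) ℝ)) (τ : GL (Fin n) ℝ → (Fin n → ℝ)) :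
    Prop :=
  ∀ γ ∈ Γ, ∀ γ' ∈ Γ, τ (γ * γ') = τ γ + (γ : Matrix (Fin n) (Fin n) ℝ).mulVec (τ γ')

/-- `Λ_τ`: the pairs (repulsive fixed direction `v(γ) ∈ 𝒮⁺` with eigenvalue
`λ(γ) ∈ (0,1)`, `s_τ(γ) = ⟨τ(γ)|v(γ)⟩/(1 − λ(γ)⁻¹)`) of loxodromic elements of `Γ`. -/
def LambdaSet {n : ℕ} (Γ : Subgroup (GL (Fin n) ℝ)) (τ : GL (Fin n) ℝ → (Fin n → ℝ)) :
    Set ((Fin n → ℝ) × ℝ) :=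
  {p | ∃ γ ∈ Γ, ∃ lam : ℝ, 0 < lam ∧ lam < 1 ∧ p.1 ∈ Splus n ∧
    (γ : Matrix (Fin n) (Fin n) ℝ).mulVec p.1 = lam • p.1 ∧
    p.2 = mink (τ γ) p.1 / (1 - lam⁻¹)}

/-- The basepoint `e = (1,0,…,0)` of the hyperboloid `ℍ^{n-1}`. -/
def basePt (n : ℕ) : Fin n → ℝ := fun i => if (i : ℕ) = 0 then 1 else 0

/-- The limit set `Λ̂ ⊆ 𝒮⁺` of `Γ`: limits of normalized orbits `γ_k·e/N(γ_k·e)` of the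
basepoint along pairwise distinct elements of `Γ`. -/
def limitSet {n : ℕ} (Γ : Subgroup (GL (Fin n) ℝ)) : Set (Fin n → ℝ) :=
  {v | v ∈ Splus n ∧ ∃ γ : ℕ → GL (Fin n) ℝ, (∀ k, γ k ∈ Γ) ∧ Function.Injective γ ∧
    Tendsto (fun k => (eNorm ((γ k : Matrix (Fin n) (Fin n) ℝ).mulVec (basePt n)))⁻¹ •
      (γ k : Matrix (Fin n) (Fin n) ℝ).mulVec (basePt n)) atTop (nhds v)}

/-- The convex hull `C ⊆ ℍ^{n-1}` of the limit set of `Γ`. -/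
def convexCore {n : ℕ} (Γ : Subgroup (GL (Fin n) ℝ)) : Set (Fin n → ℝ) :=
  {x | mink x x = -1 ∧ (∀ i : Fin n, (i : ℕ) = 0 → 0 < x i) ∧
    ∃ t : ℝ, 0 < t ∧ t • x ∈ convexHull ℝ (limitSet Γ)}

/-! ### Minkowski geometry -/

theorem mink_eq {m : ℕ} (x y : Fin (m + 1) → ℝ) :
    mink x y = -(x 0 * y 0) + ∑ i : Fin m, x i.succ * y i.succ := by
  simp [mink, Fin.sum_univ_succ]

theorem mink_comm {n : ℕ} (x y : Fin n → ℝ) : mink x y = mink y x := by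
  unfold mink
  exact Finset.sum_congr rfl fun i _ => by ring

theorem mink_add_left {n : ℕ} (x y z : Fin n → ℝ) : mink (x + y) z = mink x z + mink y z := by
  unfold mink
  rw [← Finset.sum_add_distrib]
  exact Finset.sum_congr rfl fun i _ => by simp only [Pi.add_apply]; ring

theorem mink_smul_left {n : ℕ} (c : ℝ) (x z : Fin n → ℝ) : mink (c • x) z = c * mink x z := by
  unfold mink
  rw [Finset.mul_sum]
  exact Finset.sum_congr rfl fun i _ => by simp only [Pi.smul_apply, smul_eq_mul]; ring

theorem mink_add_right {n : ℕ} (x y z : Fin n → ℝ) : mink z (x + y) = mink z x + mink z y := by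
  rw [mink_comm, mink_add_left, mink_comm x, mink_comm y]

theorem mink_smul_right {n : ℕ} (c : ℝ) (x z : Fin n → ℝ) : mink z (c • x) = c * mink z x := by
  rw [mink_comm, mink_smul_left, mink_comm x]

theorem mink_base {m : ℕ} (x : Fin (m + 1) → ℝ) : mink (basePt (m + 1)) x = -x 0 := by
  simp [mink_eq, basePt]

/-- Reversed Cauchy–Schwarz, as a sign statement: a future timelike and a future causal vector
have negative product. -/
theorem mink_neg {m : ℕ} {x c : Fin (m + 1) → ℝ} (hx : mink x x < 0) (hx0 : 0 < x 0)
    (hc : mink c c ≤ 0) (hc0 : 0 < c 0) : mink x c < 0 := by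
  rw [mink_eq] at *
  have h1 := Finset.sum_mul_sq_le_sq_mul_sq Finset.univ (fun i : Fin m => x i.succ)
    (fun i => c i.succ)
  simp only [pow_two] at h1
  have hA : 0 ≤ ∑ i : Fin m, x i.succ * x i.succ :=
    Finset.sum_nonneg fun i _ => mul_self_nonneg _
  have hB : 0 ≤ ∑ i : Fin m, c i.succ * c i.succ :=
    Finset.sum_nonneg fun i _ => mul_self_nonneg _
  have h2 : (∑ i : Fin m, x i.succ * x i.succ) * (∑ i : Fin m, c i.succ * c i.succ)
      < (x 0 * x 0) * (c 0 * c 0) := by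
    have : 0 < c 0 * c 0 := by positivity
    nlinarith
  have h3 : (∑ i : Fin m, x i.succ * c i.succ) < x 0 * c 0 := by
    apply lt_of_pow_lt_pow_left₀ 2 (by positivity)
    nlinarith
  linarith

theorem mink_eq_zero_of_causal {m : ℕ} {c : Fin (m + 1) → ℝ} (hc : mink c c ≤ 0) (h0 : c 0 = 0)
    (x : Fin (m + 1) → ℝ) : mink x c = 0 := by
  rw [mink_eq] at *
  have hz : ∑ i : Fin m, c i.succ * c i.succ = 0 :=
    le_antisymm (by simpa [h0] using hc) (Finset.sum_nonneg fun i _ => mul_self_nonneg _)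
  rw [Finset.sum_eq_zero_iff_of_nonneg fun i _ => mul_self_nonneg _] at hz
  have : ∀ i : Fin m, c i.succ = 0 := fun i => mul_self_eq_zero.1 (hz i (Finset.mem_univ _))
  simp [h0, this]

/-- A causal vector is future as soon as it pairs negatively with one future timelike vector. -/
theorem future_of_mink_neg {m : ℕ} {x c : Fin (m + 1) → ℝ} (hx : mink x x < 0) (hx0 : 0 < x 0)
    (hc : mink c c ≤ 0) (h : mink x c < 0) : 0 < c 0 := by
  rcases lt_trichotomy (c 0) 0 with h0 | h0 | h0
  · have := mink_neg hx hx0 (c := (-1 : ℝ) • c)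
      (by rw [mink_smul_left, mink_smul_right]; linarith) (by simpa using h0)
    rw [mink_smul_right] at this
    linarith
  · rw [mink_eq_zero_of_causal hc h0] at h
    exact absurd h (lt_irrefl _)
  · exact h0

/-- The hyperboloid model `ℍ^m`. -/
def Hyp (m : ℕ) : Set (Fin (m + 1) → ℝ) := {x | mink x x = -1 ∧ 0 < x 0}

theorem base_mem (m : ℕ) : basePt (m + 1) ∈ Hyp m := by
  constructor
  · rw [mink_base]; simp [basePt]
  · simp [basePt]

/-- Triangle inequality in multiplicative form: `cosh (s + t) ≤ 2 cosh s cosh t`. The third point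
may also be lightlike. The reflection of `c` in the line of `b` is again future causal, so it
pairs negatively with `a`. -/
theorem hyp_triangle {m : ℕ} {a b c : Fin (m + 1) → ℝ} (ha : a ∈ Hyp m) (hb : b ∈ Hyp m)
    (hc : mink c c ≤ 0) (hc0 : 0 < c 0) :
    -mink a c ≤ 2 * (-mink a b) * (-mink b c) := by
  obtain ⟨hb1, hb0⟩ := hb
  obtain ⟨ha1, ha0⟩ := ha
  have hbc := mink_neg (by linarith) hb0 hc hc0
  have hd : mink ((-1 : ℝ) • c + (-2 * mink b c) • b) ((-1 : ℝ) • c + (-2 * mink b c) • b) ≤ 0 := by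
    simp only [mink_add_left, mink_add_right, mink_smul_left, mink_smul_right, hb1, mink_comm c b]
    linarith
  have hd2 : mink b ((-1 : ℝ) • c + (-2 * mink b c) • b) < 0 := by
    simp only [mink_add_right, mink_smul_right, hb1]
    linarith
  have h0 := future_of_mink_neg (by linarith) hb0 hd hd2
  have := mink_neg (by linarith) ha0 hd h0
  simp only [mink_add_right, mink_smul_right] at this
  linarith

theorem hyp_neg_mink_pos {m : ℕ} {a b : Fin (m + 1) → ℝ} (ha : a ∈ Hyp m) (hb : b ∈ Hyp m) :
    0 < -mink a b := by
  have := mink_neg (by linarith [ha.1]) ha.2 (by linarith [hb.1] : mink b b ≤ 0) hb.2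
  linarith

theorem abs_le_of_causal {m : ℕ} {u : Fin (m + 1) → ℝ} (hu : mink u u ≤ 0) (h0 : 0 < u 0)
    (i : Fin (m + 1)) : |u i| ≤ u 0 := by
  rcases Fin.eq_zero_or_eq_succ i with rfl | ⟨j, rfl⟩
  · exact (abs_of_pos h0).le
  · rw [mink_eq] at hu
    have := Finset.single_le_sum (f := fun i : Fin m => u i.succ * u i.succ)
      (fun i _ => mul_self_nonneg _) (Finset.mem_univ j)
    exact abs_le_of_sq_le_sq (by nlinarith [this]) h0.le

theorem abs_mink_le {m : ℕ} (x : Fin (m + 1) → ℝ) {u : Fin (m + 1) → ℝ} (hu : mink u u ≤ 0)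
    (h0 : 0 < u 0) : |mink x u| ≤ (∑ i, |x i|) * u 0 := by
  unfold mink
  refine (Finset.abs_sum_le_sum_abs _ _).trans ?_
  rw [Finset.sum_mul]
  refine Finset.sum_le_sum fun i _ => ?_
  rw [abs_mul, abs_mul]
  have h1 : |(if (i : ℕ) = 0 then (-1 : ℝ) else 1)| = 1 := by split_ifs <;> simp
  rw [h1, one_mul]
  exact mul_le_mul_of_nonneg_left (abs_le_of_causal hu h0 i) (abs_nonneg _)

/-! ### The group action -/

theorem inv_mulVec_mulVec {n : ℕ} (g : GL (Fin n) ℝ) (x : Fin n → ℝ) :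
    (g⁻¹).val *ᵥ (g.val *ᵥ x) = x := by
  rw [mulVec_mulVec, ← Units.val_mul]; simp

theorem mulVec_inv_mulVec {n : ℕ} (g : GL (Fin n) ℝ) (x : Fin n → ℝ) :
    g.val *ᵥ ((g⁻¹).val *ᵥ x) = x := by
  rw [mulVec_mulVec, ← Units.val_mul]; simp

theorem mink_adj {n : ℕ} {g : GL (Fin n) ℝ} (hg : IsSOo g) (x y : Fin n → ℝ) :
    mink (g.val *ᵥ x) y = mink x ((g⁻¹).val *ᵥ y) := by
  rw [← hg.1 x, mulVec_inv_mulVec]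

theorem mulVec_base {m : ℕ} (g : GL (Fin (m + 1)) ℝ) (i : Fin (m + 1)) :
    (g.val *ᵥ basePt (m + 1)) i = g.val i 0 := by
  simp [mulVec, dotProduct, basePt]

theorem mulVec_base_mem {m : ℕ} {g : GL (Fin (m + 1)) ℝ} (hg : IsSOo g) :
    g.val *ᵥ basePt (m + 1) ∈ Hyp m :=
  ⟨by rw [hg.1, (base_mem m).1], by rw [mulVec_base]; exact hg.2.2 0 rfl⟩

theorem mulVec_future {m : ℕ} {g : GL (Fin (m + 1)) ℝ} (hg : IsSOo g) {u : Fin (m + 1) → ℝ}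
    (hu : mink u u ≤ 0) (h0 : 0 < u 0) : 0 < (g.val *ᵥ u) 0 := by
  have he := mulVec_base_mem hg
  refine future_of_mink_neg (by linarith [he.1]) he.2 (by rwa [hg.1]) ?_
  rw [hg.1, mink_base]
  linarith

theorem mulVec_mem_hyp {m : ℕ} {g : GL (Fin (m + 1)) ℝ} (hg : IsSOo g) {x : Fin (m + 1) → ℝ}
    (hx : x ∈ Hyp m) : g.val *ᵥ x ∈ Hyp m :=
  ⟨by rw [hg.1, hx.1], mulVec_future hg (by linarith [hx.1]) hx.2⟩

theorem inv_zero_zero {m : ℕ} {g : GL (Fin (m + 1)) ℝ} (hg : IsSOo g) :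
    (g⁻¹).val 0 0 = g.val 0 0 := by
  have h := mink_adj hg (basePt (m + 1)) (basePt (m + 1))
  rw [mink_comm, mink_base, mink_base, mulVec_base, mulVec_base] at h
  linarith

/-- Every entry of a Lorentz matrix is controlled by its `(0,0)` entry. -/
theorem entry_bound {m : ℕ} {g : GL (Fin (m + 1)) ℝ} (hg : IsSOo g) (hg' : IsSOo g⁻¹)
    (i j : Fin (m + 1)) : |g.val i j| ≤ 2 * g.val 0 0 + 1 := by
  have h00 : 0 < g.val 0 0 := hg.2.2 0 rfl
  have hinv := inv_zero_zero hg
  -- The first row of `g` consists, up to sign, of the entries of the first column of `g⁻¹`.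
  have hrow : ∀ j, |g.val 0 j| ≤ g.val 0 0 := by
    intro j
    have h := mink_adj hg (Pi.single j 1) (basePt (m + 1))
    rw [mink_comm, mink_base, mulVec_single_one] at h
    have hk : |mink (Pi.single j 1) ((g⁻¹).val *ᵥ basePt (m + 1))| ≤ g.val 0 0 := by
      have he := mulVec_base_mem hg'
      have := abs_mink_le (Pi.single j 1) (by linarith [he.1] :
        mink ((g⁻¹).val *ᵥ basePt (m + 1)) ((g⁻¹).val *ᵥ basePt (m + 1)) ≤ 0) he.2
      rw [mulVec_base, hinv] at this
      refine this.trans ?_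
      have hs : ∑ i, |(Pi.single j 1 : Fin (m + 1) → ℝ) i| = 1 := by
        simp [Pi.single_apply, apply_ite]
      rw [hs, one_mul]
    rw [← h, abs_neg] at hk
    simpa using hk
  rcases Fin.eq_zero_or_eq_succ i with rfl | ⟨k, rfl⟩
  · linarith [hrow j]
  · have h1 : mink (g.val *ᵥ Pi.single j 1) (g.val *ᵥ Pi.single j 1) ≤ 1 := by
      rw [hg.1]
      rcases Fin.eq_zero_or_eq_succ j with rfl | ⟨l, rfl⟩
      · simp [mink_eq]
      · simp [mink_eq, Pi.single_apply, (Fin.succ_ne_zero l).symm]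
    rw [mulVec_single_one, mink_eq] at h1
    have h2 := Finset.single_le_sum (f := fun i : Fin m => g.val i.succ j * g.val i.succ j)
      (fun i _ => mul_self_nonneg _) (Finset.mem_univ k)
    simp only [col_apply] at h1 h2
    have h3 := abs_le.1 (hrow j)
    apply abs_le_of_sq_le_sq _ (by linarith)
    nlinarith [mul_nonneg (sub_nonneg.2 h3.2) (by linarith : 0 ≤ g.val 0 0 + g.val 0 j)]

/-! ### Discreteness -/

/-- A discrete group of Lorentz matrices has finitely many elements moving the basepoint by a
bounded amount, so any vector-valued function is bounded on them. -/
theorem tau_bound {m : ℕ} (Γ : Subgroup (GL (Fin (m + 1)) ℝ)) (hSO : ∀ γ ∈ Γ, IsSOo γ)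
    (hdisc : DiscreteTopology
      ↥(Units.val '' (Γ : Set (GL (Fin (m + 1)) ℝ)) :
        Set (Matrix (Fin (m + 1)) (Fin (m + 1)) ℝ)))
    (τ : GL (Fin (m + 1)) ℝ → (Fin (m + 1) → ℝ)) (R : ℝ) :
    ∃ T : ℝ, 0 ≤ T ∧ ∀ h ∈ Γ, h.val 0 0 ≤ R → ∑ i, |τ h i| ≤ T := by
  have hd : DiscreteTopology Γ := by
    let f : Γ → ↥(Units.val '' (Γ : Set (GL (Fin (m + 1)) ℝ)) :
        Set (Matrix (Fin (m + 1)) (Fin (m + 1)) ℝ)) := fun g => ⟨g.1.val, g.1, g.2, rfl⟩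
    have hf : Continuous f := by
      refine Continuous.subtype_mk ?_ _
      exact Units.continuous_val.comp continuous_subtype_val
    refine DiscreteTopology.of_continuous_injective hf fun a b hab => ?_
    exact Subtype.ext (Units.ext (congrArg Subtype.val hab))
  have hcl : IsClosed (Γ : Set (GL (Fin (m + 1)) ℝ)) := Subgroup.isClosed_of_discrete
  let B : Set (Matrix (Fin (m + 1)) (Fin (m + 1)) ℝ) :=
    Set.univ.pi fun _ => Set.univ.pi fun _ => Icc (-(2 * R + 1)) (2 * R + 1)
  have hB : IsCompact B := isCompact_univ_pi fun _ => isCompact_univ_pi fun _ => isCompact_Icc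
  have hS : IsCompact ((Units.embedProduct (Matrix (Fin (m + 1)) (Fin (m + 1)) ℝ)) ⁻¹'
      (B ×ˢ (MulOpposite.unop ⁻¹' B))) := by
    refine Units.isClosedEmbedding_embedProduct.isCompact_preimage (hB.prod ?_)
    exact MulOpposite.opHomeomorph.symm.isClosedEmbedding.isCompact_preimage hB
  have hfin : ((Units.embedProduct (Matrix (Fin (m + 1)) (Fin (m + 1)) ℝ)) ⁻¹'
      (B ×ˢ (MulOpposite.unop ⁻¹' B)) ∩ (Γ : Set (GL (Fin (m + 1)) ℝ))).Finite := by
    refine (hS.inter_right hcl).finite ?_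
    have : IsDiscrete (Γ : Set (GL (Fin (m + 1)) ℝ)) := ⟨hd⟩
    exact this.mono inter_subset_right
  obtain ⟨T, hT⟩ := (hfin.image fun h => ∑ i, |τ h i|).bddAbove
  refine ⟨max T 0, le_max_right _ _, fun h hh hR => le_max_of_le_left (hT ⟨h, ⟨?_, hh⟩, rfl⟩)⟩
  have hi := Γ.inv_mem hh
  have hinv := inv_zero_zero (hSO h hh)
  constructor
  · intro i _ j _
    have := abs_le.1 (entry_bound (hSO _ hh) (hSO _ hi) i j)
    exact ⟨by simp only [Units.embedProduct_apply]; linarith,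
      by simp only [Units.embedProduct_apply]; linarith⟩
  · intro i _ j _
    have := abs_le.1 (entry_bound (hSO _ hi) (by simpa using hSO _ hh) i j)
    rw [hinv] at this
    exact ⟨by simp only [Units.embedProduct_apply, MulOpposite.unop_op]; linarith,
      by simp only [Units.embedProduct_apply, MulOpposite.unop_op]; linarith⟩

/-! ### Fixed directions and rays in the convex core -/

theorem sum_mul_eq {m : ℕ} (x y : Fin (m + 1) → ℝ) :
    ∑ i, x i * y i = mink x y + 2 * (x 0 * y 0) := by
  rw [mink_eq, Fin.sum_univ_succ]; ring

theorem splus_facts {m : ℕ} {v : Fin (m + 1) → ℝ} (hv : v ∈ Splus (m + 1)) :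
    mink v v = 0 ∧ 0 < v 0 ∧ 2 * (v 0 * v 0) = 1 := by
  obtain ⟨h1, h2, h3⟩ := hv
  refine ⟨h1, h3 0 rfl, ?_⟩
  have := sum_mul_eq v v
  simp only [← pow_two] at *
  linarith

/-- A point of the hyperboloid that almost pairs to zero with `v ∈ 𝒮⁺` has a Euclidean
normalization close to `v`. -/
theorem normalized_close {m : ℕ} {y v : Fin (m + 1) → ℝ} (hy : y ∈ Hyp m)
    (hv : v ∈ Splus (m + 1)) (i : Fin (m + 1)) :
    (((eNorm y)⁻¹ • y) i - v i) ^ 2 ≤ 2 * (-mink y v) := by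
  obtain ⟨hv1, hv0, hvv⟩ := splus_facts hv
  obtain ⟨hy1, hy0⟩ := hy
  have hneg := mink_neg (by linarith) hy0 hv1.le hv0
  set N := eNorm y with hN
  have hsum : ∑ i, y i * y i = 2 * (y 0 * y 0) - 1 := by rw [sum_mul_eq, hy1]; ring
  have hNsq : N * N = 2 * (y 0 * y 0) - 1 := by
    rw [hN, eNorm, Real.mul_self_sqrt (Finset.sum_nonneg fun i _ => sq_nonneg _), ← hsum]
    exact Finset.sum_congr rfl fun i _ => pow_two _
  have hy01 : 1 ≤ y 0 * y 0 := by
    have h := mink_eq y y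
    have h2 : 0 ≤ ∑ i : Fin m, y i.succ * y i.succ :=
      Finset.sum_nonneg fun i _ => mul_self_nonneg _
    linarith
  have hN0 : 0 ≤ N := Real.sqrt_nonneg _
  have hN1 : 1 ≤ N := by nlinarith
  have hNle : N ≤ 2 * (y 0 * v 0) := by
    apply le_of_sq_le_sq _ (by positivity)
    have : (2 * (y 0 * v 0)) ^ 2 = 2 * (y 0 * y 0) * (2 * (v 0 * v 0)) := by ring
    rw [this, hvv]
    nlinarith
  have hNi : N * N⁻¹ = 1 := mul_inv_cancel₀ (by linarith)
  have hNi1 : N⁻¹ ≤ 1 := inv_le_one_of_one_le₀ hN1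
  have hNi0 : 0 < N⁻¹ := by positivity
  have hexp : ∑ i, ((N⁻¹ • y) i - v i) ^ 2 = 2 - 2 * N⁻¹ * (mink y v + 2 * (y 0 * v 0)) := by
    have : ∀ i, ((N⁻¹ • y) i - v i) ^ 2
        = N⁻¹ * N⁻¹ * (y i * y i) - 2 * N⁻¹ * (y i * v i) + v i * v i := by
      intro i; simp only [Pi.smul_apply, smul_eq_mul]; ring
    simp only [this, Finset.sum_add_distrib, Finset.sum_sub_distrib, ← Finset.mul_sum]
    rw [sum_mul_eq y v, hsum, ← hNsq, sum_mul_eq v v, hv1, hvv]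
    linear_combination (N * N⁻¹ + 1) * hNi
  have hi := Finset.single_le_sum (f := fun i => ((N⁻¹ • y) i - v i) ^ 2)
    (fun i _ => sq_nonneg _) (Finset.mem_univ i)
  rw [hexp] at hi
  refine hi.trans ?_
  nlinarith

theorem mulVec_pow {n : ℕ} (g : GL (Fin n) ℝ) {v : Fin n → ℝ} {c : ℝ}
    (h : g.val *ᵥ v = c • v) (k : ℕ) : (g ^ k).val *ᵥ v = c ^ k • v := by
  induction k with
  | zero => simp
  | succ k ih =>
    rw [pow_succ, Units.val_mul, ← mulVec_mulVec, h, mulVec_smul, ih, smul_smul, pow_succ, mul_comm]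

/-- The repulsive direction of a loxodromic element is a limit point: it is approached by the
orbit of the basepoint under the powers of the inverse. -/
theorem fixed_mem_limitSet {m : ℕ} {Γ : Subgroup (GL (Fin (m + 1)) ℝ)}
    (hSO : ∀ γ ∈ Γ, IsSOo γ) {γ : GL (Fin (m + 1)) ℝ} (hγ : γ ∈ Γ) {lam : ℝ} (h0 : 0 < lam)
    (h1 : lam < 1) {v : Fin (m + 1) → ℝ} (hv : v ∈ Splus (m + 1)) (hfix : γ.val *ᵥ v = lam • v) :
    v ∈ limitSet Γ := by
  obtain ⟨hv1, hv0, hvv⟩ := splus_facts hv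
  have hmem : ∀ k : ℕ, (γ⁻¹) ^ k ∈ Γ := fun k => Γ.pow_mem (Γ.inv_mem hγ) k
  have hfix' : (γ⁻¹).val *ᵥ v = lam⁻¹ • v := by
    have := inv_mulVec_mulVec γ v
    rw [hfix, mulVec_smul] at this
    rw [← this, smul_smul, inv_mul_cancel₀ h0.ne', one_smul, this]
  refine ⟨hv, fun k => (γ⁻¹) ^ k, hmem, ?_, ?_⟩
  · intro k l hkl
    have h := congrArg (fun g : GL (Fin (m + 1)) ℝ => (g.val *ᵥ v) 0) hkl
    simp only [mulVec_pow _ hfix', Pi.smul_apply, smul_eq_mul] at h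
    exact pow_right_injective₀ (inv_pos.2 h0) (by simpa using h1.ne) (mul_right_cancel₀ hv0.ne' h)
  · rw [tendsto_pi_nhds]
    intro i
    have hb : Tendsto (fun k : ℕ => Real.sqrt (2 * (lam ^ k * v 0))) atTop (nhds 0) := by
      have h2 : Tendsto (fun k : ℕ => 2 * (lam ^ k * v 0)) atTop (nhds (2 * (0 * v 0))) :=
        ((tendsto_pow_atTop_nhds_zero_of_lt_one h0.le h1).mul_const _).const_mul _
      simpa using h2.sqrt
    rw [tendsto_iff_norm_sub_tendsto_zero]
    refine squeeze_zero (fun _ => norm_nonneg _) (fun k => ?_) hb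
    rw [Real.norm_eq_abs]
    apply Real.abs_le_sqrt
    have hg := hSO _ (hmem k)
    have hm : -mink (((γ⁻¹) ^ k).val *ᵥ basePt (m + 1)) v = lam ^ k * v 0 := by
      have h := hg.1 (basePt (m + 1)) v
      rw [mulVec_pow _ hfix', mink_smul_right, mink_base, inv_pow] at h
      have : lam ^ k * (lam ^ k)⁻¹ = 1 := mul_inv_cancel₀ (by positivity)
      linear_combination (-lam ^ k) * h - (-mink (((γ⁻¹) ^ k).val *ᵥ basePt (m + 1)) v) * this
    rw [← hm]
    exact normalized_close (mulVec_base_mem hg) hv i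

/-- The geodesic ray from `p` to the ideal point `v`, with parameter `q = exp (-t)`. -/
def ray {n : ℕ} (p v : Fin n → ℝ) (q : ℝ) : Fin n → ℝ :=
  q • p + ((q⁻¹ - q) / (2 * -mink p v)) • v

theorem ray_mem {m : ℕ} {Γ : Subgroup (GL (Fin (m + 1)) ℝ)} {p v : Fin (m + 1) → ℝ}
    (hp : p ∈ convexCore Γ) (hv : v ∈ limitSet Γ) {q : ℝ} (hq0 : 0 < q) (hq1 : q ≤ 1) :
    ray p v q ∈ convexCore Γ := by
  obtain ⟨hv1, hv0, hvv⟩ := splus_facts hv.1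
  obtain ⟨hp1, hp0, t, ht, htp⟩ := hp
  have hp0 := hp0 0 rfl
  have hD := mink_neg (by linarith) hp0 hv1.le hv0
  unfold ray
  set c := (q⁻¹ - q) / (2 * -mink p v) with hc
  have hc0 : 0 ≤ c := by
    have : 1 ≤ q⁻¹ := (one_le_inv₀ hq0).2 hq1
    exact div_nonneg (by linarith) (by linarith)
  refine ⟨?_, ?_, (q / t + c)⁻¹, by positivity, ?_⟩
  · have h : 2 * (q * c * mink p v) = q * q - 1 := by
      have : mink p v ≠ 0 := hD.ne
      rw [hc]; field_simp; ring
    simp only [mink_add_left, mink_add_right, mink_smul_left, mink_smul_right, hp1, hv1,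
      mink_comm v p]
    linarith
  · intro i hi
    obtain rfl : i = 0 := Fin.ext hi
    simp only [Pi.add_apply, Pi.smul_apply, smul_eq_mul]
    positivity
  · have hpos : 0 < q / t + c := by positivity
    have := (convex_convexHull ℝ (limitSet Γ)) htp (subset_convexHull ℝ _ hv)
      (a := (q / t + c)⁻¹ * (q / t)) (b := (q / t + c)⁻¹ * c) (by positivity) (by positivity)
      (by rw [← mul_add, inv_mul_cancel₀ hpos.ne'])
    convert this using 1
    rw [smul_add, smul_smul, smul_smul, smul_smul]
    congr 2
    field_simp

/-- If `x = g k` and `x' = g' k'` with `k`, `k'` near the basepoint and `δ x'` near `x`, then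
`g⁻¹ δ g'` moves the basepoint by a bounded amount. -/
theorem transition_bound {m : ℕ} {g g' δ : GL (Fin (m + 1)) ℝ} (hg : IsSOo g) (hg' : IsSOo g')
    (hδ : IsSOo δ) (hi : IsSOo g⁻¹) {k k' : Fin (m + 1) → ℝ} (hk : k ∈ Hyp m) (hk' : k' ∈ Hyp m) :
    (g⁻¹ * δ * g').val 0 0 ≤
      4 * k 0 * (-mink (g.val *ᵥ k) (δ.val *ᵥ (g'.val *ᵥ k'))) * k' 0 := by
  have he := base_mem m
  have hge := mulVec_mem_hyp hg he
  have hgk := mulVec_mem_hyp hg hk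
  have hde := mulVec_mem_hyp hδ (mulVec_mem_hyp hg' he)
  have hdk := mulVec_mem_hyp hδ (mulVec_mem_hyp hg' hk')
  have h1 : (g⁻¹ * δ * g').val 0 0 =
      -mink (g.val *ᵥ basePt (m + 1)) (δ.val *ᵥ (g'.val *ᵥ basePt (m + 1))) := by
    rw [mink_adj hg, mink_base, mulVec_mulVec, mulVec_mulVec, ← Units.val_mul, ← Units.val_mul,
      mulVec_base, neg_neg, mul_assoc]
  have h2 := hyp_triangle hge hgk (by linarith [hde.1]) hde.2
  have h3 := hyp_triangle hgk hdk (by linarith [hde.1]) hde.2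
  rw [hg.1, mink_base, neg_neg] at h2
  rw [hδ.1 (g'.val *ᵥ k'), hg'.1, mink_comm k', mink_base, neg_neg] at h3
  rw [h1]
  have := hk.2
  nlinarith

/-! ### The uniform bound on `s_τ` -/

/-- The numbers `s_τ(γ)` are bounded: each is the limit of `⟨τ(g_j)|v(γ)⟩`, where `g_j ∈ Γ` follows
the ray from `p` to `v(γ)`, and this sequence has geometrically small steps. -/
theorem s_bound {m : ℕ} (Γ : Subgroup (GL (Fin (m + 1)) ℝ)) (hSO : ∀ γ ∈ Γ, IsSOo γ)
    (hdisc : DiscreteTopology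
      ↥(Units.val '' (Γ : Set (GL (Fin (m + 1)) ℝ)) :
        Set (Matrix (Fin (m + 1)) (Fin (m + 1)) ℝ)))
    (hcc : ∃ K : Set (Fin (m + 1) → ℝ), IsCompact K ∧
      convexCore Γ ⊆ ⋃ γ ∈ Γ, ((γ : Matrix (Fin (m + 1)) (Fin (m + 1)) ℝ).mulVec) '' K)
    (τ : GL (Fin (m + 1)) ℝ → (Fin (m + 1) → ℝ)) (hτ : IsCocycle Γ τ)
    {p : Fin (m + 1) → ℝ} (hp : p ∈ convexCore Γ) :
    ∃ B : ℝ, ∀ γ ∈ Γ, ∀ lam : ℝ, 0 < lam → lam < 1 → ∀ v ∈ Splus (m + 1),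
      γ.val *ᵥ v = lam • v → |mink (τ γ) v / (1 - lam⁻¹)| ≤ B := by
  obtain ⟨K, hK, hcov⟩ := hcc
  obtain ⟨M', hM'⟩ := (hK.image (continuous_apply (0 : Fin (m + 1)))).bddAbove
  obtain ⟨M, hM0, hM⟩ : ∃ M : ℝ, 0 < M ∧ ∀ k ∈ K, k 0 ≤ M :=
    ⟨max M' 1, by positivity, fun k hk => le_max_of_le_left (hM' ⟨k, hk, rfl⟩)⟩
  have hpH : p ∈ Hyp m := ⟨hp.1, hp.2.1 0 rfl⟩
  obtain ⟨T, hT0, hT⟩ := tau_bound Γ hSO hdisc τ (4 * M * (5 / 4) * M)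
  obtain ⟨T₀, hT₀0, hT₀⟩ := tau_bound Γ hSO hdisc τ (4 * p 0 * 1 * M)
  set S := ∑ i, |p i| with hS
  have hS0 : 0 ≤ S := Finset.sum_nonneg fun i _ => abs_nonneg _
  refine ⟨T₀ + 2 * (T * (2 * M * S)) + 1, fun γ hγ lam h0 h1 v hv hfix => ?_⟩
  obtain ⟨hv1, hv0, hvv⟩ := splus_facts hv
  have hv01 : v 0 ≤ 1 := by nlinarith
  have hvL := fixed_mem_limitSet hSO hγ h0 h1 hv hfix
  have hDpos : 0 < -mink p v := by
    have := mink_neg (by linarith [hpH.1]) hpH.2 hv1.le hv0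
    linarith
  have hDS : -mink p v ≤ S := by
    have := (abs_le.1 (abs_mink_le p hv1.le hv0)).1
    nlinarith
  have hq0 : ∀ j : ℕ, 0 < (1 / 2 : ℝ) ^ j := fun j => by positivity
  have hq1 : ∀ j : ℕ, (1 / 2 : ℝ) ^ j ≤ 1 := fun j => pow_le_one₀ (by norm_num) (by norm_num)
  have hex : ∀ j : ℕ, ∃ g ∈ Γ, ∃ k ∈ K, g.val *ᵥ k = ray p v ((1 / 2) ^ j) := by
    intro j
    have := hcov (ray_mem hp hvL (hq0 j) (hq1 j))
    simpa only [mem_iUnion, mem_image, exists_prop] using this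
  choose g hg k hk hgk using hex
  have hkH : ∀ j, k j ∈ Hyp m := by
    intro j
    have hr := ray_mem hp hvL (hq0 j) (hq1 j)
    have : k j = ((g j)⁻¹).val *ᵥ ray p v ((1 / 2) ^ j) := by rw [← hgk, inv_mulVec_mulVec]
    rw [this]
    exact mulVec_mem_hyp (hSO _ (Γ.inv_mem (hg j))) ⟨hr.1, hr.2.1 0 rfl⟩
  have hu0 : ∀ j, 0 < (((g j)⁻¹).val *ᵥ v) 0 := fun j =>
    mulVec_future (hSO _ (Γ.inv_mem (hg j))) hv1.le hv0
  have hu1 : ∀ j, mink (((g j)⁻¹).val *ᵥ v) (((g j)⁻¹).val *ᵥ v) ≤ 0 := fun j => by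
    rw [(hSO _ (Γ.inv_mem (hg j))).1, hv1]
  -- The vectors `g_j⁻¹ v` decay exponentially, since `⟨k_j|g_j⁻¹ v⟩ = ⟨x_j|v⟩ = 2⁻ʲ⟨p|v⟩`.
  have hu : ∀ j, (((g j)⁻¹).val *ᵥ v) 0 ≤ 2 * M * S * (1 / 2) ^ j := by
    intro j
    have h2 := hyp_triangle (base_mem m) (hkH j) (hu1 j) (hu0 j)
    rw [← mink_adj (hSO _ (hg j)) (k j), hgk, mink_base, mink_base, ray, mink_add_left, mink_smul_left,
      mink_smul_left, hv1, neg_neg, neg_neg] at h2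
    have h3 : k j 0 * -mink p v ≤ M * S :=
      mul_le_mul (hM _ (hk j)) hDS hDpos.le hM0.le
    have := hq0 j
    nlinarith
  have herr : ∀ (T : ℝ) (j : ℕ) (w : Fin (m + 1) → ℝ), 0 ≤ T → ∑ i, |w i| ≤ T →
      |mink w (((g j)⁻¹).val *ᵥ v)| ≤ T * (2 * M * S) * (1 / 2) ^ j := by
    intro T j w hT hw
    refine (abs_mink_le w (hu1 j) (hu0 j)).trans ?_
    rw [mul_assoc]
    exact mul_le_mul hw (hu j) (hu0 j).le hT
  have htrans : ∀ j l, ∀ δ ∈ Γ, ∀ R, 0 ≤ R →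
      -mink (ray p v ((1 / 2) ^ j)) (δ.val *ᵥ ray p v ((1 / 2) ^ l)) ≤ R →
      ((g j)⁻¹ * δ * g l).val 0 0 ≤ 4 * M * R * M := by
    intro j l δ hδ R hR h
    have h2 := transition_bound (hSO _ (hg j)) (hSO _ (hg l)) (hSO _ hδ)
      (hSO _ (Γ.inv_mem (hg j))) (hkH j) (hkH l)
    have hpos := hyp_neg_mink_pos (mulVec_mem_hyp (hSO _ (hg j)) (hkH j))
      (mulVec_mem_hyp (hSO _ hδ) (mulVec_mem_hyp (hSO _ (hg l)) (hkH l)))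
    rw [hgk, hgk] at h2 hpos
    refine h2.trans ?_
    have := (hkH j).2
    have := (hkH l).2
    have := hM _ (hk j)
    have := hM _ (hk l)
    gcongr
  have hstep : ∀ j, |mink (τ (g (j + 1))) v - mink (τ (g j)) v| ≤
      T * (2 * M * S) * (1 / 2) ^ j := by
    intro j
    have hmem : (g j)⁻¹ * 1 * g (j + 1) ∈ Γ :=
      Γ.mul_mem (Γ.mul_mem (Γ.inv_mem (hg j)) Γ.one_mem) (hg _)
    have hb := hT _ hmem (htrans j (j + 1) 1 Γ.one_mem (5 / 4) (by norm_num) (by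
      -- `cosh (log 2) = 5/4`
      have hq := hq0 j
      have hne := (neg_pos.1 hDpos).ne
      simp only [ray, Units.val_one, one_mulVec, mink_add_left, mink_add_right, mink_smul_left,
        mink_smul_right, hpH.1, hv1, mink_comm v p, pow_succ]
      generalize (1 / 2 : ℝ) ^ j = q at *
      apply le_of_eq
      field_simp
      ring))
    have hc := hτ _ (hg j) _ hmem
    have : g j * ((g j)⁻¹ * 1 * g (j + 1)) = g (j + 1) := by group
    rw [this] at hc
    rw [hc, mink_add_left, add_sub_cancel_left]
    have h5 := herr T j _ hT0 hb
    rwa [← mink_adj (hSO _ (hg j))] at h5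
  have hzero : |mink (τ (g 0)) v| ≤ T₀ := by
    have h2 := transition_bound (hSO _ Γ.one_mem) (hSO _ (hg 0)) (hSO _ Γ.one_mem)
      (hSO _ (Γ.inv_mem Γ.one_mem)) hpH (hkH 0)
    rw [hgk] at h2
    have h3 : ray p v ((1 / 2) ^ 0) = p := by simp [ray]
    simp only [h3, Units.val_one, one_mulVec, hpH.1, inv_one, one_mul, neg_neg] at h2
    have h4 := hT₀ _ (hg 0) (h2.trans (by
      have := hpH.2
      have := hM _ (hk 0)
      gcongr))
    refine (abs_mink_le _ hv1.le hv0).trans ?_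
    nlinarith
  have hall : ∀ j, |mink (τ (g j)) v| ≤
      T₀ + 2 * (T * (2 * M * S)) * (1 - (1 / 2) ^ j) := by
    intro j
    induction j with
    | zero => simpa using hzero
    | succ j ih =>
      have h6 := abs_sub_abs_le_abs_sub (mink (τ (g (j + 1))) v) (mink (τ (g j)) v)
      have h7 := hstep j
      rw [pow_succ]
      linarith
  -- `γ` moves every point of the ray by a bounded amount.
  set R := -mink p (γ.val *ᵥ p) + (lam + lam⁻¹) / 2 with hR
  have hpg : 0 < -mink p (γ.val *ᵥ p) := hyp_neg_mink_pos hpH (mulVec_mem_hyp (hSO _ hγ) hpH)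
  have hlam : 0 < lam⁻¹ := inv_pos.2 h0
  have hadj : ∀ y, lam * mink (γ.val *ᵥ y) v = mink y v := by
    intro y
    have := (hSO _ hγ).1 y v
    rwa [hfix, mink_smul_right] at this
  have hR0 : 0 ≤ R := by positivity
  obtain ⟨T₁, hT₁0, hT₁⟩ := tau_bound Γ hSO hdisc τ (4 * M * R * M)
  have hmv : ∀ j, -mink (ray p v ((1 / 2) ^ j)) (γ.val *ᵥ ray p v ((1 / 2) ^ j)) ≤ R := by
    intro j
    have hq := hq0 j
    have hq1 := hq1 j
    have hne := (neg_pos.1 hDpos).ne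
    have h8 : mink v (γ.val *ᵥ p) = lam⁻¹ * mink p v := by
      rw [mink_comm, ← hadj p, ← mul_assoc, inv_mul_cancel₀ h0.ne', one_mul]
    simp only [ray, mulVec_add, mulVec_smul, hfix, mink_add_left, mink_add_right, mink_smul_left,
      mink_smul_right, hv1, h8]
    generalize (1 / 2 : ℝ) ^ j = q at *
    have h9 : q * ((q⁻¹ - q) / (2 * -mink p v)) * mink p v = -(1 - q * q) / 2 := by
      field_simp
    have h10 : q * q ≤ 1 := by nlinarith
    have h11 : q * q * (-mink p (γ.val *ᵥ p)) ≤ 1 * (-mink p (γ.val *ᵥ p)) := by gcongr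
    have h12 : (1 - q * q) / 2 * (lam + lam⁻¹) ≤ 1 / 2 * (lam + lam⁻¹) := by
      gcongr
      nlinarith
    rw [hR]
    linear_combination h11 + h12 - (lam + lam⁻¹) * h9
  -- Both `γ g_j` and `g_j h_j`, with `h_j = g_j⁻¹ γ g_j` in a finite set, compute `τ(γ g_j)`;
  -- comparing the two shows that `⟨τ(g_j)|v⟩` converges to `s_τ(γ)`.
  have hlim : ∀ j, |mink (τ γ) v / (1 - lam⁻¹) - mink (τ (g j)) v| ≤
      T₁ * (2 * M * S) * (1 / 2) ^ j / (lam⁻¹ - 1) := by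
    intro j
    have hl1 : 1 < lam⁻¹ := (one_lt_inv₀ h0).2 h1
    have hmem : (g j)⁻¹ * γ * g j ∈ Γ := Γ.mul_mem (Γ.mul_mem (Γ.inv_mem (hg j)) hγ) (hg _)
    have hb := herr T₁ j _ hT₁0 (hT₁ _ hmem (htrans j j γ hγ R hR0 (hmv j)))
    rw [← mink_adj (hSO _ (hg j))] at hb
    have hc1 := hτ _ (hg j) _ hmem
    have hc2 := hτ _ hγ _ (hg j)
    have : g j * ((g j)⁻¹ * γ * g j) = γ * g j := by group
    rw [this, hc2] at hc1
    have h13 := congrArg (fun z => mink z v) hc1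
    simp only [mink_add_left] at h13
    have h14 : mink (γ.val *ᵥ τ (g j)) v = lam⁻¹ * mink (τ (g j)) v := by
      rw [← hadj (τ (g j)), ← mul_assoc, inv_mul_cancel₀ h0.ne', one_mul]
    rw [h14] at h13
    have hne : 1 - lam⁻¹ ≠ 0 := by linarith
    have h15 : mink (τ γ) v / (1 - lam⁻¹) - mink (τ (g j)) v =
        mink ((g j).val *ᵥ τ ((g j)⁻¹ * γ * g j)) v / (1 - lam⁻¹) := by
      rw [eq_div_iff hne, sub_mul, div_mul_cancel₀ _ hne]
      linear_combination h13
    rw [h15, abs_div, abs_of_neg (by linarith : 1 - lam⁻¹ < 0), neg_sub]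
    exact div_le_div_of_nonneg_right hb (by linarith)
  have hto : Tendsto (fun j : ℕ => T₁ * (2 * M * S) * (1 / 2 : ℝ) ^ j / (lam⁻¹ - 1)) atTop
      (nhds 0) := by
    have := ((tendsto_pow_atTop_nhds_zero_of_lt_one (r := (1 / 2 : ℝ)) (by norm_num)
      (by norm_num)).const_mul (T₁ * (2 * M * S))).div_const (lam⁻¹ - 1)
    simpa using this
  obtain ⟨j, hj⟩ := (hto.eventually (gt_mem_nhds one_pos)).exists
  have h16 := abs_sub_abs_le_abs_sub (mink (τ γ) v / (1 - lam⁻¹)) (mink (τ (g j)) v)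
  have h17 := hlim j
  have h18 := hall j
  have h19 : 2 * (T * (2 * M * S)) * (1 - (1 / 2) ^ j) ≤ 2 * (T * (2 * M * S)) * 1 := by
    have := hq0 j
    gcongr
    linarith
  linarith

/-- Two distinct limit points span a geodesic in the convex core; its midpoint is used. -/
theorem core_nonempty {m : ℕ} {Γ : Subgroup (GL (Fin (m + 1)) ℝ)} {v w : Fin (m + 1) → ℝ}
    (hv : v ∈ limitSet Γ) (hw : w ∈ limitSet Γ) (hne : v ≠ w) : (convexCore Γ).Nonempty := by
  obtain ⟨hv1, hv0, hvv⟩ := splus_facts hv.1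
  obtain ⟨hw1, hw0, hww⟩ := splus_facts hw.1
  have heq : v 0 = w 0 := by nlinarith
  have hD : 0 < -mink v w := by
    obtain ⟨i, hi⟩ := Function.ne_iff.1 hne
    have h1 : 0 < ∑ i, (v i - w i) * (v i - w i) :=
      Finset.sum_pos' (fun i _ => mul_self_nonneg _)
        ⟨i, Finset.mem_univ _, mul_self_pos.2 (sub_ne_zero.2 hi)⟩
    have h2 : ∀ i, (v i - w i) * (v i - w i) = v i * v i - 2 * (v i * w i) + w i * w i :=
      fun i => by ring
    simp only [h2, Finset.sum_add_distrib, Finset.sum_sub_distrib, ← Finset.mul_sum,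
      sum_mul_eq, hv1, hw1, ← heq] at h1
    linarith
  set r := Real.sqrt (2 * -mink v w) with hr
  have hr0 : 0 < r := Real.sqrt_pos.2 (by linarith)
  have hrr : r * r = 2 * -mink v w := Real.mul_self_sqrt (by linarith)
  refine ⟨r⁻¹ • (v + w), ?_, ?_, r / 2, by positivity, ?_⟩
  · simp only [mink_add_left, mink_add_right, mink_smul_left, mink_smul_right, hv1, hw1,
      mink_comm w v]
    field_simp
    linarith
  · intro i hi
    obtain rfl : i = 0 := Fin.ext hi
    simp only [Pi.add_apply, Pi.smul_apply, smul_eq_mul]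
    positivity
  · have := (convex_convexHull ℝ (limitSet Γ)) (subset_convexHull ℝ _ hv)
      (subset_convexHull ℝ _ hw) (a := 1 / 2) (b := 1 / 2) (by norm_num) (by norm_num)
      (by norm_num)
    convert this using 1
    rw [smul_smul, smul_add]
    congr 2 <;> field_simp

/-- for a finitely generated, nonelementary, convex cocompact discrete
subgroup `Γ ≤ SO₀(1,n−1)`, every cocycle `τ : Γ → ℝⁿ` is future admissible. -/
theorem stmt16 {n : ℕ} (hn : 2 ≤ n) (Γ : Subgroup (GL (Fin n) ℝ))
    (hSO : ∀ γ ∈ Γ, IsSOo γ)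
    (hdisc : DiscreteTopology
      ↥(Units.val '' (Γ : Set (GL (Fin n) ℝ)) : Set (Matrix (Fin n) (Fin n) ℝ)))
    (hfg : Γ.FG)
    (hnonelemH : ∀ x : Fin n → ℝ, mink x x = -1 → (∀ i : Fin n, (i : ℕ) = 0 → 0 < x i) →
      {y : Fin n → ℝ | ∃ γ ∈ Γ, (γ : Matrix (Fin n) (Fin n) ℝ).mulVec x = y}.Infinite)
    (hnonelemS : ∀ v ∈ Splus n,
      {w : Fin n → ℝ | ∃ γ ∈ Γ,
        (eNorm ((γ : Matrix (Fin n) (Fin n) ℝ).mulVec v))⁻¹ •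
          (γ : Matrix (Fin n) (Fin n) ℝ).mulVec v = w}.Infinite)
    (hcc : ∃ K : Set (Fin n → ℝ), IsCompact K ∧
      convexCore Γ ⊆ ⋃ γ ∈ Γ, ((γ : Matrix (Fin n) (Fin n) ℝ).mulVec) '' K)
    (τ : GL (Fin n) ℝ → (Fin n → ℝ)) (hτ : IsCocycle Γ τ) :
    (OmegaPlus (LambdaSet Γ τ)).Nonempty := by
  obtain ⟨m, rfl⟩ : ∃ m, n = m + 1 := ⟨n - 1, by omega⟩
  rcases (LambdaSet Γ τ).eq_empty_or_nonempty with hE | ⟨⟨v, s⟩, γ, hγ, lam, h0, h1, hv, hfix, -⟩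
  · exact ⟨0, by simp [OmegaPlus, hE]⟩
  have hvL := fixed_mem_limitSet hSO hγ h0 h1 hv hfix
  -- A translate of `v` by the group is a second limit point, fixed by a conjugate of `γ`.
  obtain ⟨w, ⟨g, hg, hgw⟩, hwv⟩ := (hnonelemS v hv).exists_notMem_finset {v}
  simp only at hv hfix hvL
  obtain ⟨hv1, hv0, hvv⟩ := splus_facts hv
  set y := (g : Matrix (Fin (m + 1)) (Fin (m + 1)) ℝ).mulVec v with hy
  have hy0 : 0 < y 0 := mulVec_future (hSO _ hg) hv1.le hv0
  have hyy : mink y y = 0 := by rw [hy, (hSO _ hg).1, hv1]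
  have hsum : 0 < ∑ i, y i ^ 2 :=
    Finset.sum_pos' (fun i _ => sq_nonneg _) ⟨0, Finset.mem_univ _, by positivity⟩
  have hN : 0 < eNorm y := Real.sqrt_pos.2 hsum
  have hNN : eNorm y ^ 2 = ∑ i, y i ^ 2 := Real.sq_sqrt hsum.le
  have hw : w ∈ Splus (m + 1) := by
    rw [← hgw]
    refine ⟨by rw [mink_smul_left, mink_smul_right, hyy]; ring, ?_, ?_⟩
    · simp only [Pi.smul_apply, smul_eq_mul, mul_pow, ← Finset.mul_sum, ← hNN]
      field_simp
    · intro i hi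
      obtain rfl : i = 0 := Fin.ext hi
      simp only [Pi.smul_apply, smul_eq_mul]
      positivity
  have hwL : w ∈ limitSet Γ := by
    refine fixed_mem_limitSet hSO (Γ.mul_mem (Γ.mul_mem hg hγ) (Γ.inv_mem hg)) h0 h1 hw ?_
    rw [← hgw, Units.val_mul, Units.val_mul, ← mulVec_mulVec, ← mulVec_mulVec, mulVec_smul, hy,
      inv_mulVec_mulVec, mulVec_smul, mulVec_smul, hfix, mulVec_smul, smul_comm]
  obtain ⟨p, hp⟩ := core_nonempty hvL hwL (fun h => hwv (by simp [h]))
  obtain ⟨B, hB⟩ := s_bound Γ hSO hdisc hcc τ hτ hp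
  refine ⟨(2 * (|B| + 1)) • basePt (m + 1), ?_⟩
  rintro ⟨v', s'⟩ ⟨γ', hγ', lam', h0', h1', hv', hfix', hs'⟩
  simp only at hv' hfix' hs' ⊢
  obtain ⟨-, hv0', hvv'⟩ := splus_facts hv'
  have h2 := (abs_le.1 (hB γ' hγ' lam' h0' h1' v' hv' hfix')).1
  have h3 := le_abs_self B
  have h4 := abs_nonneg B
  -- `v'₀ = 1/√2 > 1/2`
  have h5 : 1 / 2 < v' 0 := by nlinarith
  rw [mink_smul_left, mink_base, hs']
  nlinarith
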